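/- Call a pair (γ,δ) ∈ [N]×[T] admissible if (α,β,γ,δ) ∈ 𝔛 for some α ∈ [N], β ∈ [M]. Let γ₀ > 0. Suppose matrices H_χ, X_χ, Z_{χ,χ'} ∈ ℝ^{n×n} (with X_χ and Z_{χ,χ'} symmetric), G_{γ,δ} ∈ ℝ^{n×n}, and F_{γ,δ} ∈ ℝ^{m×n} satisfy, for all χ = (α,β,γ,δ) and χ' in 𝔛: the symmetric block matrix with diagonal blocks G_{γ,δ} + G_{γ,δ}ᵀ − X_χ, γ₀ I_q, H_χ + H_χᵀ − F̄_χ(Z), I_ℓ, with sub-diagonal blocks (3,1) = A_α G_{γ,δ} + B_α F_{γ,δ}, (3,2) = E_α, (4,1) = C_α G_{γ,δ} + D_α F_{γ,δ}, all other off-diagonal blocks zero (and the corresponding transposed blocks above the diagonal), is positive definite; and the symmetric block matrix [[Z_{χ,χ'}, H_χᵀ],[H_χ, X_{χ'}]] is positive definite. Then G_{γ,δ} is invertible for every admissible (γ,δ), and with feedback gains K_{γ,δ} = F_{γ,δ} G_{γ,δ}⁻¹ for admissible (γ,δ), the closed-loop system Σ_K is mean square stable and ‖Σ_K‖∞² <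 γ₀. -/

import Mathlib

open MeasureTheory ProbabilityTheory Matrix

noncomputable section

/-- The state space `[N] × [M] × [N] × [T]` of the extended process `r̄`.
`Fin N`, `Fin M`, `Fin T` play the roles of `[N] = {1,…,N}`, `[M]`, `[T]`
(with `Fin T` being the 0-indexed version of `[T] = {1,…,T}`, i.e. `δ ∈ [T]`
corresponds to `δ - 1 : Fin T`). -/
abbrev XT (NN MM T : ℕ) : Type := Fin NN × Fin MM × Fin NN × Fin T

/-- `X` is a time-homogeneous Markov chain with transition probability matrix `P`:
for every `k`, every state `j` and every sequence of states `i`,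
`Pr(X(k+1) = j ∧ X(l) = i l for all l ≤ k) = P (i k) j * Pr(X(l) = i l for all l ≤ k)`. -/
def IsMarkovChain {Ω : Type} {_mΩ : MeasurableSpace Ω} (μ : Measure Ω) {S : Type}
    (X : ℕ → Ω → S) (P : S → S → ℝ) : Prop :=
  ∀ (k : ℕ) (j : S) (i : ℕ → S),
    (μ {ω | X (k + 1) ω = j ∧ ∀ l ≤ k, X l ω = i l}).toReal
      = P (i k) j * (μ {ω | ∀ l ≤ k, X l ω = i l}).toReal

/-- `⌊m⌋_T`, the unique element of `{0,…,T-1}` congruent to `m` modulo `T`, as `Fin T`. -/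
def intToFin (T : ℕ) [NeZero T] (a : ℤ) : Fin T :=
  ⟨(a % (T : ℤ)).toNat, by
    have hT : 0 < (T : ℤ) := by
      exact_mod_cast Nat.pos_of_ne_zero (NeZero.ne T)
    have h1 : 0 ≤ a % (T : ℤ) := Int.emod_nonneg a (by omega)
    have h2 : a % (T : ℤ) < (T : ℤ) := Int.emod_lt_of_pos a hT
    omega⟩

-- `τ(k)`: the most recent observation time `≤ k` (i.e. the largest `j ≤ k` with
-- `f(s(j)) = 1`), or `τ₀` if no observation has occurred up to time `k` (`k < t₀`).
open Classical in
def tauZ {Ω : Type} {MM : ℕ} (s : ℕ → Ω → Fin MM) (f : Fin MM → Bool)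
    (τ₀ : ℤ) (k : ℕ) (ω : Ω) : ℤ :=
  if ∃ j ≤ k, f (s j ω) = true
  then ((Nat.findGreatest (fun j => f (s j ω) = true) k : ℕ) : ℤ)
  else τ₀

-- `σ(k) = r(τ(k))` if an observation occurred by time `k` (i.e. `k ≥ t₀`), else `σ₀`.
open Classical in
def sigmaProc {Ω : Type} {NN MM : ℕ} (r : ℕ → Ω → Fin NN) (s : ℕ → Ω → Fin MM)
    (f : Fin MM → Bool) (σ₀ : Fin NN) (k : ℕ) (ω : Ω) : Fin NN :=
  if ∃ j ≤ k, f (s j ω) = true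
  then r (Nat.findGreatest (fun j => f (s j ω) = true) k) ω
  else σ₀

/-- `ρ(k) = ⌊k - τ(k)⌋_T + 1 ∈ [T]`, represented 0-indexed as `⌊k - τ(k)⌋_T : Fin T`. -/
def rhoProc {Ω : Type} {MM T : ℕ} [NeZero T] (s : ℕ → Ω → Fin MM) (f : Fin MM → Bool)
    (τ₀ : ℤ) (k : ℕ) (ω : Ω) : Fin T :=
  intToFin T ((k : ℤ) - tauZ s f τ₀ k ω)

/-- The extended process `r̄(k) = (r(k), s(k), σ(k), ρ(k))`. -/
def rbarProc {Ω : Type} {NN MM T : ℕ} [NeZero T] (r : ℕ → Ω → Fin NN)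
    (s : ℕ → Ω → Fin MM) (f : Fin MM → Bool) (τ₀ : ℤ) (σ₀ : Fin NN)
    (k : ℕ) (ω : Ω) : XT NN MM T :=
  (r k ω, s k ω, sigmaProc r s f σ₀ k ω, rhoProc s f τ₀ k ω)

/-- Membership in `𝔛`: if `f(β) = 1` then `α = γ` and `δ = 1` (0-indexed: `δ = 0`). -/
def inX {NN MM T : ℕ} [NeZero T] (f : Fin MM → Bool) (χ : XT NN MM T) : Prop :=
  f χ.2.1 = true → χ.1 = χ.2.2.1 ∧ χ.2.2.2 = 0

/-- The transition probabilities `p̄_{χχ'}` of the extended chain. The condition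
`⌊δ' - δ - 1⌋_T = 0` for `δ, δ' ∈ [T]` is, in 0-indexed form, `δ' = δ + 1` in `Fin T`. -/
def pbar {NN MM T : ℕ} [NeZero T] (P : Matrix (Fin NN) (Fin NN) ℝ)
    (Q : Matrix (Fin MM) (Fin MM) ℝ) (f : Fin MM → Bool) (χ χ' : XT NN MM T) : ℝ :=
  (if f χ'.2.1 = true
    then (if χ'.1 = χ'.2.2.1 ∧ χ'.2.2.2 = 0 then (1 : ℝ) else 0)
    else (if χ'.2.2.1 = χ.2.2.1 ∧ χ'.2.2.2 = χ.2.2.2 + 1 then (1 : ℝ) else 0))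
  * P χ.1 χ'.1 * Q χ.2.1 χ'.2.1

/-- The state trajectory of the closed-loop system
`x(k+1) = A(mode(k)) x(k) + E(mode(k)) w(k)`, `x(0) = x₀`. -/
def traj {Ω S : Type} {n q : ℕ}
    (Amat : S → Matrix (Fin n) (Fin n) ℝ) (Emat : S → Matrix (Fin n) (Fin q) ℝ)
    (mode : ℕ → Ω → S) (w : ℕ → Ω → Fin q → ℝ) (x0 : Fin n → ℝ) : ℕ → Ω → Fin n → ℝ
  | 0, _ => x0
  | (k + 1), ω =>
      (Amat (mode k ω)).mulVec (traj Amat Emat mode w x0 k ω)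
        + (Emat (mode k ω)).mulVec (w k ω)

/-- `A_{K,χ} = A_α + B_α K_{γ,δ}`. -/
def AKmat {NN MM T n m : ℕ} (A : Fin NN → Matrix (Fin n) (Fin n) ℝ)
    (B : Fin NN → Matrix (Fin n) (Fin m) ℝ)
    (K : Fin NN → Fin T → Matrix (Fin m) (Fin n) ℝ) (χ : XT NN MM T) :
    Matrix (Fin n) (Fin n) ℝ :=
  A χ.1 + B χ.1 * K χ.2.2.1 χ.2.2.2

/-- `C_{K,χ} = C_α + D_α K_{γ,δ}`. -/
def CKmat {NN MM T n m ℓ : ℕ} (C : Fin NN → Matrix (Fin ℓ) (Fin n) ℝ)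
    (D : Fin NN → Matrix (Fin ℓ) (Fin m) ℝ)
    (K : Fin NN → Fin T → Matrix (Fin m) (Fin n) ℝ) (χ : XT NN MM T) :
    Matrix (Fin ℓ) (Fin n) ℝ :=
  C χ.1 + D χ.1 * K χ.2.2.1 χ.2.2.2

/-- Squared Euclidean norm of a vector, as an extended nonnegative real. -/
def sqE {d : ℕ} (v : Fin d → ℝ) : ENNReal := ENNReal.ofReal (∑ i, (v i) ^ 2)

-- The operator `D̄_χ(R) = ∑_{χ' ∈ 𝔛} p̄_{χ'χ} R_{χ'}`.
open Classical in
def Dop {NN MM T n : ℕ} [NeZero T] (P : Matrix (Fin NN) (Fin NN) ℝ)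
    (Q : Matrix (Fin MM) (Fin MM) ℝ) (f : Fin MM → Bool)
    (R : XT NN MM T → Matrix (Fin n) (Fin n) ℝ) (χ : XT NN MM T) :
    Matrix (Fin n) (Fin n) ℝ :=
  ∑ χ' : XT NN MM T, if inX f χ' then pbar P Q f χ' χ • R χ' else 0

-- The operator `F̄_χ(Z) = ∑_{χ' ∈ 𝔛} p̄_{χχ'} Z_{χ,χ'}`.
open Classical in
def Fop {NN MM T n : ℕ} [NeZero T] (P : Matrix (Fin NN) (Fin NN) ℝ)
    (Q : Matrix (Fin MM) (Fin MM) ℝ) (f : Fin MM → Bool)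
    (Z : XT NN MM T → XT NN MM T → Matrix (Fin n) (Fin n) ℝ) (χ : XT NN MM T) :
    Matrix (Fin n) (Fin n) ℝ :=
  ∑ χ' : XT NN MM T, if inX f χ' then pbar P Q f χ χ' • Z χ χ' else 0

/-- A pair `(γ,δ) ∈ [N] × [T]` is admissible if `(α,β,γ,δ) ∈ 𝔛` for some `α, β`. -/
def Admissible {NN MM T : ℕ} [NeZero T] (f : Fin MM → Bool) (g : Fin NN) (d : Fin T) : Prop :=
  ∃ (α : Fin NN) (β : Fin MM), inX (T := T) f (α, β, g, d)

/-- A realization, on some probability space, of the pair of independent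
time-homogeneous Markov chains `(r, s)` with transition matrices `P` and `Q`. -/
structure MJLSReal (NN MM : ℕ) (P : Matrix (Fin NN) (Fin NN) ℝ)
    (Q : Matrix (Fin MM) (Fin MM) ℝ) : Type 1 where
  Ω : Type
  inst : MeasurableSpace Ω
  μ : @Measure Ω inst
  prob : IsProbabilityMeasure μ
  r : ℕ → Ω → Fin NN
  s : ℕ → Ω → Fin MM
  meas_r : ∀ k, Measurable[inst] (r k)
  meas_s : ∀ k, Measurable[inst] (s k)
  markov_r : IsMarkovChain μ r fun i j => P i j
  markov_s : IsMarkovChain μ s fun i j => Q i j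
  indep : IndepFun (fun ω l => r l ω) (fun ω l => s l ω) μ

/-- A realization, on some probability space, of a time-homogeneous Markov chain `θ`
taking values in `𝔛` with transition probabilities `p̄`. -/
structure ThetaReal (NN MM T : ℕ) [NeZero T] (P : Matrix (Fin NN) (Fin NN) ℝ)
    (Q : Matrix (Fin MM) (Fin MM) ℝ) (f : Fin MM → Bool) : Type 1 where
  Ω : Type
  inst : MeasurableSpace Ω
  μ : @Measure Ω inst
  prob : IsProbabilityMeasure μ
  θ : ℕ → Ω → XT NN MM T
  meas : ∀ k, Measurable[inst] (θ k)
  mem : ∀ k ω, inX f (θ k ω)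
  markov : IsMarkovChain μ θ (pbar P Q f)

/-- Mean square stability of the closed-loop system `Σ_K`: there are `c > 0` and
`λ ∈ [0,1)` such that for every realization, every deterministic initialization
(`r(0) = r₀`, `s(0) = s₀` a.s., together with `σ₀` and `τ₀ ≤ 0`, so that `r̄(0)`
is a deterministic element of `𝔛`), every `x₀` and every `k`,
`E[‖x(k)‖²] ≤ c λ^k ‖x₀‖²` (with `w ≡ 0`). -/
def MeanSquareStable {NN MM T n m q : ℕ} [NeZero T]
    (P : Matrix (Fin NN) (Fin NN) ℝ) (Qm : Matrix (Fin MM) (Fin MM) ℝ) (f : Fin MM → Bool)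
    (A : Fin NN → Matrix (Fin n) (Fin n) ℝ) (B : Fin NN → Matrix (Fin n) (Fin m) ℝ)
    (E : Fin NN → Matrix (Fin n) (Fin q) ℝ)
    (K : Fin NN → Fin T → Matrix (Fin m) (Fin n) ℝ) : Prop :=
  ∃ c : ℝ, 0 < c ∧ ∃ lam : ℝ, 0 ≤ lam ∧ lam < 1 ∧
    ∀ (S : MJLSReal NN MM P Qm) (τ₀ : ℤ), τ₀ ≤ 0 →
      ∀ (σ₀ r₀ : Fin NN) (s₀ : Fin MM),
        (∀ᵐ ω ∂S.μ, S.r 0 ω = r₀ ∧ S.s 0 ω = s₀) →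
        ∀ (x0 : Fin n → ℝ) (k : ℕ),
          (∫⁻ ω, sqE (traj (AKmat A B K) (fun χ => E χ.1)
              (rbarProc S.r S.s f τ₀ σ₀) (fun _ _ => 0) x0 k ω) ∂S.μ)
            ≤ ENNReal.ofReal (c * lam ^ k * ∑ i, (x0 i) ^ 2)

/-- Mean square stability of `Σ̄_K` (the system driven by the chain `θ`). -/
def MeanSquareStableBar {NN MM T n m q : ℕ} [NeZero T]
    (P : Matrix (Fin NN) (Fin NN) ℝ) (Qm : Matrix (Fin MM) (Fin MM) ℝ) (f : Fin MM → Bool)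
    (A : Fin NN → Matrix (Fin n) (Fin n) ℝ) (B : Fin NN → Matrix (Fin n) (Fin m) ℝ)
    (E : Fin NN → Matrix (Fin n) (Fin q) ℝ)
    (K : Fin NN → Fin T → Matrix (Fin m) (Fin n) ℝ) : Prop :=
  ∃ c : ℝ, 0 < c ∧ ∃ lam : ℝ, 0 ≤ lam ∧ lam < 1 ∧
    ∀ (S : ThetaReal NN MM T P Qm f) (χ : XT NN MM T), inX f χ →
      (∀ᵐ ω ∂S.μ, S.θ 0 ω = χ) →
      ∀ (x0 : Fin n → ℝ) (k : ℕ),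
        (∫⁻ ω, sqE (traj (AKmat A B K) (fun χ' => E χ'.1) S.θ (fun _ _ => 0) x0 k ω) ∂S.μ)
          ≤ ENNReal.ofReal (c * lam ^ k * ∑ i, (x0 i) ^ 2)

/-- The impulse disturbance `w = e_i φ`, i.e. `w(0) = e_i` and `w(k) = 0` for `k ≥ 1`. -/
def impulse {Ω : Type} (q : ℕ) (i : Fin q) : ℕ → Ω → Fin q → ℝ :=
  fun k _ j => if k = 0 ∧ j = i then 1 else 0

/-- `∑_k E[‖z(k; 0, χ, e_i φ)‖²]` for `Σ_K` on a given realization with data `(τ₀, σ₀)`. -/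
def H2TermSigma {NN MM T n m q ℓ : ℕ} [NeZero T]
    {P : Matrix (Fin NN) (Fin NN) ℝ} {Qm : Matrix (Fin MM) (Fin MM) ℝ}
    (S : MJLSReal NN MM P Qm) (f : Fin MM → Bool) (τ₀ : ℤ) (σ₀ : Fin NN)
    (A : Fin NN → Matrix (Fin n) (Fin n) ℝ) (B : Fin NN → Matrix (Fin n) (Fin m) ℝ)
    (C : Fin NN → Matrix (Fin ℓ) (Fin n) ℝ) (D : Fin NN → Matrix (Fin ℓ) (Fin m) ℝ)
    (E : Fin NN → Matrix (Fin n) (Fin q) ℝ)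
    (K : Fin NN → Fin T → Matrix (Fin m) (Fin n) ℝ) (i : Fin q) : ENNReal :=
  ∑' k : ℕ, ∫⁻ ω, sqE ((CKmat C D K (rbarProc S.r S.s f τ₀ σ₀ k ω)).mulVec
      (traj (AKmat A B K) (fun χ => E χ.1) (rbarProc S.r S.s f τ₀ σ₀)
        (impulse q i) 0 k ω)) ∂S.μ

-- `‖Σ_K‖₂² < γ`, where `‖Σ_K‖₂² = ∑_{i=1}^q ∑_{χ ∈ 𝔛} μ̄(χ) ‖z(⬝;0,χ,e_iφ)‖₂²` and the
-- expectations are over arbitrary realizations with deterministic initialization `r̄(0) = χ`.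
open Classical in
def H2SqLtSigma {NN MM T n m q ℓ : ℕ} [NeZero T]
    (P : Matrix (Fin NN) (Fin NN) ℝ) (Qm : Matrix (Fin MM) (Fin MM) ℝ) (f : Fin MM → Bool)
    (A : Fin NN → Matrix (Fin n) (Fin n) ℝ) (B : Fin NN → Matrix (Fin n) (Fin m) ℝ)
    (C : Fin NN → Matrix (Fin ℓ) (Fin n) ℝ) (D : Fin NN → Matrix (Fin ℓ) (Fin m) ℝ)
    (E : Fin NN → Matrix (Fin n) (Fin q) ℝ)
    (K : Fin NN → Fin T → Matrix (Fin m) (Fin n) ℝ)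
    (μbar : XT NN MM T → ℝ) (γ : ℝ) : Prop :=
  ∀ (S : Fin q → XT NN MM T → MJLSReal NN MM P Qm)
    (τ : Fin q → XT NN MM T → ℤ) (σv : Fin q → XT NN MM T → Fin NN),
    (∀ i χ, inX f χ → τ i χ ≤ 0 ∧
        (∀ᵐ ω ∂(S i χ).μ, rbarProc (S i χ).r (S i χ).s f (τ i χ) (σv i χ) 0 ω = χ)) →
    (∑ i : Fin q, ∑ χ : XT NN MM T,
        if inX f χ
        then ENNReal.ofReal (μbar χ) * H2TermSigma (S i χ) f (τ i χ) (σv i χ) A B C D E K i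
        else 0)
      < ENNReal.ofReal γ

/-- `∑_k E[‖z̄(k; 0, χ, e_i φ)‖²]` for `Σ̄_K` on a given realization of `θ`. -/
def H2TermBar {NN MM T n m q ℓ : ℕ} [NeZero T]
    {P : Matrix (Fin NN) (Fin NN) ℝ} {Qm : Matrix (Fin MM) (Fin MM) ℝ} {f : Fin MM → Bool}
    (S : ThetaReal NN MM T P Qm f)
    (A : Fin NN → Matrix (Fin n) (Fin n) ℝ) (B : Fin NN → Matrix (Fin n) (Fin m) ℝ)
    (C : Fin NN → Matrix (Fin ℓ) (Fin n) ℝ) (D : Fin NN → Matrix (Fin ℓ) (Fin m) ℝ)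
    (E : Fin NN → Matrix (Fin n) (Fin q) ℝ)
    (K : Fin NN → Fin T → Matrix (Fin m) (Fin n) ℝ) (i : Fin q) : ENNReal :=
  ∑' k : ℕ, ∫⁻ ω, sqE ((CKmat C D K (S.θ k ω)).mulVec
      (traj (AKmat A B K) (fun χ => E χ.1) S.θ (impulse q i) 0 k ω)) ∂S.μ

-- `‖Σ̄_K‖₂² < γ` (the `H₂` norm of `Σ̄_K`, defined with `θ` in place of `r̄`).
open Classical in
def H2SqLtBar {NN MM T n m q ℓ : ℕ} [NeZero T]
    (P : Matrix (Fin NN) (Fin NN) ℝ) (Qm : Matrix (Fin MM) (Fin MM) ℝ) (f : Fin MM → Bool)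
    (A : Fin NN → Matrix (Fin n) (Fin n) ℝ) (B : Fin NN → Matrix (Fin n) (Fin m) ℝ)
    (C : Fin NN → Matrix (Fin ℓ) (Fin n) ℝ) (D : Fin NN → Matrix (Fin ℓ) (Fin m) ℝ)
    (E : Fin NN → Matrix (Fin n) (Fin q) ℝ)
    (K : Fin NN → Fin T → Matrix (Fin m) (Fin n) ℝ)
    (μbar : XT NN MM T → ℝ) (γ : ℝ) : Prop :=
  ∀ (S : Fin q → XT NN MM T → ThetaReal NN MM T P Qm f),
    (∀ i χ, inX f χ → (∀ᵐ ω ∂(S i χ).μ, (S i χ).θ 0 ω = χ)) →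
    (∑ i : Fin q, ∑ χ : XT NN MM T,
        if inX f χ
        then ENNReal.ofReal (μbar χ) * H2TermBar (S i χ) A B C D E K i
        else 0)
      < ENNReal.ofReal γ

/-- The σ-algebra `Θ_k` generated by `r(0), s(0), …, r(k), s(k)`, for a realization. -/
def sigFiltSigma {NN MM : ℕ} {P : Matrix (Fin NN) (Fin NN) ℝ}
    {Q : Matrix (Fin MM) (Fin MM) ℝ} (S : MJLSReal NN MM P Q) (k : ℕ) :
    MeasurableSpace S.Ω :=
  ⨆ j ∈ Finset.range (k + 1),
    (MeasurableSpace.comap (S.r j) inferInstance ⊔ MeasurableSpace.comap (S.s j) inferInstance)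

/-- The σ-algebra generated by `θ(0), …, θ(k)`, for a realization of `θ`. -/
def sigFiltBar {NN MM T : ℕ} [NeZero T] {P : Matrix (Fin NN) (Fin NN) ℝ}
    {Q : Matrix (Fin MM) (Fin MM) ℝ} {f : Fin MM → Bool} (S : ThetaReal NN MM T P Q f)
    (k : ℕ) : MeasurableSpace S.Ω :=
  ⨆ j ∈ Finset.range (k + 1), MeasurableSpace.comap (S.θ j) inferInstance

/-- `Σ_K` satisfies `‖Σ_K‖∞² < γ`: there is `0 ≤ c < γ` such that `‖z‖₂² ≤ c ‖w‖₂²`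
for every realization, every deterministic initialization `r̄(0) = r̄₀ ∈ 𝔛`, and
every nonzero `w ∈ ℓ²(ℝ^q)` adapted to `(Θ_k)_k` (with `x₀ = 0`). -/
def HinfSqLtSigma {NN MM T n m q ℓ : ℕ} [NeZero T]
    (P : Matrix (Fin NN) (Fin NN) ℝ) (Qm : Matrix (Fin MM) (Fin MM) ℝ) (f : Fin MM → Bool)
    (A : Fin NN → Matrix (Fin n) (Fin n) ℝ) (B : Fin NN → Matrix (Fin n) (Fin m) ℝ)
    (C : Fin NN → Matrix (Fin ℓ) (Fin n) ℝ) (D : Fin NN → Matrix (Fin ℓ) (Fin m) ℝ)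
    (E : Fin NN → Matrix (Fin n) (Fin q) ℝ)
    (K : Fin NN → Fin T → Matrix (Fin m) (Fin n) ℝ) (γ : ℝ) : Prop :=
  ∃ c : ℝ, 0 ≤ c ∧ c < γ ∧
    ∀ (S : MJLSReal NN MM P Qm) (τ₀ : ℤ), τ₀ ≤ 0 → ∀ (σ₀ : Fin NN) (χ : XT NN MM T),
      inX f χ → (∀ᵐ ω ∂S.μ, rbarProc S.r S.s f τ₀ σ₀ 0 ω = χ) →
      ∀ (w : ℕ → S.Ω → Fin q → ℝ),
        (∀ k, Measurable[sigFiltSigma S k] (w k)) →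
        0 < (∑' k : ℕ, ∫⁻ ω, sqE (w k ω) ∂S.μ) →
        (∑' k : ℕ, ∫⁻ ω, sqE (w k ω) ∂S.μ) ≠ ⊤ →
        (∑' k : ℕ, ∫⁻ ω, sqE ((CKmat C D K (rbarProc S.r S.s f τ₀ σ₀ k ω)).mulVec
            (traj (AKmat A B K) (fun χ' => E χ'.1) (rbarProc S.r S.s f τ₀ σ₀) w 0 k ω)) ∂S.μ)
          ≤ ENNReal.ofReal c * (∑' k : ℕ, ∫⁻ ω, sqE (w k ω) ∂S.μ)

/-- `Σ̄_K` satisfies `‖Σ̄_K‖∞² < γ` (disturbances adapted to the filtration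
generated by `θ`). -/
def HinfSqLtBar {NN MM T n m q ℓ : ℕ} [NeZero T]
    (P : Matrix (Fin NN) (Fin NN) ℝ) (Qm : Matrix (Fin MM) (Fin MM) ℝ) (f : Fin MM → Bool)
    (A : Fin NN → Matrix (Fin n) (Fin n) ℝ) (B : Fin NN → Matrix (Fin n) (Fin m) ℝ)
    (C : Fin NN → Matrix (Fin ℓ) (Fin n) ℝ) (D : Fin NN → Matrix (Fin ℓ) (Fin m) ℝ)
    (E : Fin NN → Matrix (Fin n) (Fin q) ℝ)
    (K : Fin NN → Fin T → Matrix (Fin m) (Fin n) ℝ) (γ : ℝ) : Prop :=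
  ∃ c : ℝ, 0 ≤ c ∧ c < γ ∧
    ∀ (S : ThetaReal NN MM T P Qm f) (χ : XT NN MM T),
      inX f χ → (∀ᵐ ω ∂S.μ, S.θ 0 ω = χ) →
      ∀ (w : ℕ → S.Ω → Fin q → ℝ),
        (∀ k, Measurable[sigFiltBar S k] (w k)) →
        0 < (∑' k : ℕ, ∫⁻ ω, sqE (w k ω) ∂S.μ) →
        (∑' k : ℕ, ∫⁻ ω, sqE (w k ω) ∂S.μ) ≠ ⊤ →
        (∑' k : ℕ, ∫⁻ ω, sqE ((CKmat C D K (S.θ k ω)).mulVec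
            (traj (AKmat A B K) (fun χ' => E χ'.1) S.θ w 0 k ω)) ∂S.μ)
          ≤ ENNReal.ofReal c * (∑' k : ℕ, ∫⁻ ω, sqE (w k ω) ∂S.μ)

/-- The symmetric 4×4 block matrix appearing in the `H∞` LMI, with diagonal blocks
`D1, γ I_q, D3, I_ℓ`, sub-diagonal blocks `(3,1) = B31`, `(3,2) = B32`, `(4,1) = B41`,
the corresponding transposed blocks above the diagonal, and zeros elsewhere. -/
def hinfBlock {n q ℓ : ℕ} (γ : ℝ) (D1 D3 : Matrix (Fin n) (Fin n) ℝ)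
    (B31 : Matrix (Fin n) (Fin n) ℝ) (B32 : Matrix (Fin n) (Fin q) ℝ)
    (B41 : Matrix (Fin ℓ) (Fin n) ℝ) :
    Matrix ((Fin n ⊕ Fin q) ⊕ (Fin n ⊕ Fin ℓ)) ((Fin n ⊕ Fin q) ⊕ (Fin n ⊕ Fin ℓ)) ℝ :=
  Matrix.fromBlocks
    (Matrix.fromBlocks D1 0 0 (γ • (1 : Matrix (Fin q) (Fin q) ℝ)))
    (Matrix.fromBlocks B31ᵀ B41ᵀ B32ᵀ 0)
    (Matrix.fromBlocks B31 B32 B41 0)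
    (Matrix.fromBlocks D3 0 0 (1 : Matrix (Fin ℓ) (Fin ℓ) ℝ))

/-!
The extended process `r̄` is itself a Markov chain, with transition probabilities `p̄`, and it
generates the same filtration as `(r, s)`; so `Σ_K` is a Markov jump linear system in the mode `r̄`.
The second LMI bounds `Hᵀ (∑ p̄_{χχ'} X_{χ'}⁻¹) H` by `F̄_χ(Z)`, and completing the square twice, in
`G` and in `H`, turns the first LMI into the bounded real inequality for the storage function
`V χ x = xᵀ X_χ⁻¹ x`: along the closed loop, `E[V⁺] + ‖z‖² < V + γ₀ ‖w‖²`. There are finitely many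
modes, so this strict inequality has a uniform margin `ε`; the margin gives the decay rate `1 - ε`
of `E[V]` when `w = 0`, and the squared gain `γ₀ - ε` from `w` to `z` when `x₀ = 0`.
-/

section MatrixInequalities

open scoped ComplexOrder MatrixOrder

variable {𝕜 m n : Type*} [RCLike 𝕜]

theorem posDef_of_fromBlocks₂₂ {A : Matrix m m 𝕜} {B : Matrix m n 𝕜} {C : Matrix n m 𝕜}
    {D : Matrix n n 𝕜} (h : (fromBlocks A B C D).PosDef) : D.PosDef :=
  h.submatrix Sum.inr_injective

theorem fromBlocks_zero_le_fromBlocks_zero [Finite m] [Finite n] {A A' : Matrix m m 𝕜}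
    {D D' : Matrix n n 𝕜} (hA : A ≤ A') (hD : D ≤ D') :
    fromBlocks A 0 0 D ≤ fromBlocks A' 0 0 D' := by
  classical
  cases nonempty_fintype m
  cases nonempty_fintype n
  have hAA := (Matrix.le_iff.mp hA).conjTranspose_mul_mul_same
    (fromCols 1 0 : Matrix m (m ⊕ n) 𝕜)
  have hDD := (Matrix.le_iff.mp hD).conjTranspose_mul_mul_same
    (fromCols 0 1 : Matrix n (m ⊕ n) 𝕜)
  rw [Matrix.le_iff]
  convert hAA.add hDD using 1
  ext (i | i) (j | j) <;>
    simp [conjTranspose_fromCols_eq_fromRows_conjTranspose, fromRows_mul]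

open Filter Topology in
theorem eventually_smul_le [Finite n] {M N : Matrix n n 𝕜} (hM : M.PosDef)
    (hN : N.IsHermitian) : ∀ᶠ ε : ℝ in 𝓝[>] 0, ε • N ≤ M := by
  classical
  cases nonempty_fintype n
  cases isEmpty_or_nonempty n
  · exact .of_forall fun ε ↦ (Subsingleton.elim _ _).le
  obtain ⟨r, hr, hrM⟩ := (CFC.exists_pos_algebraMap_le_iff hM.isHermitian).mpr
    fun x hx ↦ hM.isStrictlyPositive.spectrum_pos hx
  obtain ⟨s, hs⟩ := (isCompact_iff_compactSpace.mpr inferInstance :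
    IsCompact (spectrum ℝ N)).bddAbove
  have hNs : N ≤ algebraMap ℝ _ s :=
    le_algebraMap_of_spectrum_le (fun _ hx ↦ hs hx) hN
  have hsmall : ∀ᶠ ε : ℝ in 𝓝[>] 0, ε * s ≤ r :=
    nhdsWithin_le_nhds
      ((Continuous.tendsto' (by fun_prop) 0 0 (by simp)).eventually_le_const hr)
  filter_upwards [hsmall, self_mem_nhdsWithin] with ε hε hpos
  calc ε • N ≤ ε • algebraMap ℝ _ s := smul_le_smul_of_nonneg_left hNs hpos.le
    _ = algebraMap ℝ _ (ε * s) := by simp [Algebra.smul_def]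
    _ ≤ algebraMap ℝ _ r := by gcongr
    _ ≤ M := hrM

variable [Fintype n]

theorem posDef_sub_of_fromBlocks [Finite m] {R : Matrix m m 𝕜} {M : Matrix n m 𝕜}
    {S Y : Matrix n n 𝕜} (h : (fromBlocks R Mᴴ M S).PosDef) (hY : Y.IsHermitian)
    (hS : Y * S * Y ≤ Y) : (R - Mᴴ * Y * M).PosDef := by
  classical
  cases nonempty_fintype m
  have hinj : Function.Injective (fromRows (1 : Matrix m m 𝕜) (-(Y * M))).mulVec := by
    intro x y hxy
    simpa [fromRows_mulVec, Sum.elim_eq_iff] using (congrArg (· ∘ Sum.inl) hxy)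
  have hcongr := h.conjTranspose_mul_mul_same hinj
  have hrest := (Matrix.le_iff.mp hS).conjTranspose_mul_mul_same M
  convert hcongr.add_posSemidef hrest using 1
  rw [conjTranspose_fromRows_eq_fromCols_conjTranspose, fromCols_mul_fromBlocks,
    fromCols_mul_fromRows]
  simp only [conjTranspose_one, conjTranspose_neg, conjTranspose_mul, hY.eq, Matrix.mul_assoc,
    Matrix.add_mul, Matrix.mul_sub, Matrix.sub_mul, Matrix.neg_mul, Matrix.mul_neg, Matrix.one_mul,
    Matrix.mul_one]
  abel

theorem mul_add_conjTranspose_sub_mul_le {Y J Φ : Matrix n n 𝕜} (hY : Y.PosSemidef)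
    (hJ : Jᴴ * Y * J ≤ Φ) : Y * (J + Jᴴ - Φ) * Y ≤ Y := by
  classical
  have hsq := hY.conjTranspose_mul_mul_same (1 - J * Y)
  have hrest := (Matrix.le_iff.mp hJ).conjTranspose_mul_mul_same Y
  rw [Matrix.le_iff]
  convert hsq.add hrest using 1
  simp only [conjTranspose_sub, conjTranspose_one, conjTranspose_mul, hY.isHermitian.eq]
  noncomm_ring

theorem add_conjTranspose_sub_le [DecidableEq n] {X : Matrix n n 𝕜} (hX : X.PosDef)
    (G : Matrix n n 𝕜) : G + Gᴴ - X ≤ Gᴴ * X⁻¹ * G := by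
  have hsq := hX.inv.posSemidef.conjTranspose_mul_mul_same (G - X)
  rw [Matrix.le_iff]
  convert hsq using 1
  have := hX.isUnit.invertible
  simp only [conjTranspose_sub, hX.isHermitian.eq, Matrix.sub_mul, Matrix.mul_sub,
    Matrix.mul_inv_of_invertible, Matrix.inv_mul_cancel_right_of_invertible, Matrix.one_mul]
  abel

theorem isUnit_of_posDef_add_conjTranspose [DecidableEq n] {G : Matrix n n 𝕜}
    (hG : (G + Gᴴ).PosDef) : IsUnit G := by
  rw [← mulVec_injective_iff_isUnit]
  refine (injective_iff_map_eq_zero G.mulVecLin).mpr fun x hx ↦ ?_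
  by_contra hx0
  have := hG.dotProduct_mulVec_pos hx0
  have hx' : G *ᵥ x = 0 := hx
  simp [add_mulVec, hx', dotProduct_mulVec, ← star_mulVec] at this

theorem conjTranspose_mul_inv_mul_le [Finite m] [DecidableEq n] {Z : Matrix m m 𝕜}
    {H : Matrix n m 𝕜} {X : Matrix n n 𝕜} (h : (fromBlocks Z Hᴴ H X).PosDef) :
    Hᴴ * X⁻¹ * H ≤ Z := by
  cases nonempty_fintype m
  have hX : X.PosDef := posDef_of_fromBlocks₂₂ h
  have := hX.isUnit.invertible
  have hschur := (hX.fromBlocks₂₂ Z Hᴴ).mp (by simpa using h.posSemidef)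
  simpa [Matrix.le_iff] using hschur

theorem posDef_sub_of_fromBlocks_mul [Fintype m] [DecidableEq m] {R W N : Matrix m m 𝕜}
    {M : Matrix n m 𝕜} {S Y : Matrix n n 𝕜} (h : (fromBlocks R (M * N)ᴴ (M * N) S).PosDef)
    (hN : IsUnit N) (hR : R ≤ Nᴴ * W * N) (hY : Y.IsHermitian) (hS : Y * S * Y ≤ Y) :
    (W - Mᴴ * Y * M).PosDef := by
  rw [← hN.posDef_star_left_conjugate_iff]
  convert (posDef_sub_of_fromBlocks h hY hS).add_posSemidef (Matrix.le_iff.mp hR) using 1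
  simp only [star_eq_conjTranspose, conjTranspose_mul, Matrix.mul_sub, Matrix.sub_mul,
    Matrix.mul_assoc]
  abel

variable {q l : Type*} [Fintype l]

/-- The matrix of the bounded real lemma for `x⁺ = A x + E w`, `z = C x`: its quadratic form at
`(x, w)` is `xᴴ W x + wᴴ R w - (x⁺)ᴴ Y x⁺ - zᴴ z`, the surplus of stored energy `W` plus supply `R`
over the next stored energy `Y` plus output energy. -/
def boundedRealMatrix (W Y : Matrix n n 𝕜) (R : Matrix q q 𝕜) (A : Matrix n n 𝕜)
    (E : Matrix n q 𝕜) (C : Matrix l n 𝕜) : Matrix (n ⊕ q) (n ⊕ q) 𝕜 :=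
  fromBlocks (W - Aᴴ * Y * A - Cᴴ * C) (-(Aᴴ * Y * E)) (-(Eᴴ * Y * A)) (R - Eᴴ * Y * E)

theorem boundedRealMatrix_eq_sub [DecidableEq l] (W Y : Matrix n n 𝕜) (R : Matrix q q 𝕜)
    (A : Matrix n n 𝕜) (E : Matrix n q 𝕜) (C : Matrix l n 𝕜) :
    boundedRealMatrix W Y R A E C = fromBlocks W 0 0 R -
      (fromBlocks A E C 0)ᴴ * (fromBlocks Y 0 0 1 : Matrix (n ⊕ l) (n ⊕ l) 𝕜) *
        fromBlocks A E C 0 := by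
  ext (i | i) (j | j) <;>
    simp [boundedRealMatrix, fromBlocks_conjTranspose, fromBlocks_multiply, sub_sub]

theorem boundedRealMatrix_posDef_of_lmi [Finite q] [DecidableEq n] [DecidableEq l]
    {X G H Φ Y A : Matrix n n 𝕜} {E : Matrix n q 𝕜} {C : Matrix l n 𝕜}
    {R : Matrix q q 𝕜}
    (h : (fromBlocks (fromBlocks (G + Gᴴ - X) 0 0 R) (fromBlocks (A * G) E (C * G) 0)ᴴ
      (fromBlocks (A * G) E (C * G) 0) (fromBlocks (H + Hᴴ - Φ) 0 0 1)).PosDef)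
    (hX : X.PosDef) (hG : IsUnit G) (hY : Y.PosSemidef) (hΦ : Hᴴ * Y * H ≤ Φ) :
    (boundedRealMatrix X⁻¹ Y R A E C).PosDef := by
  classical
  cases nonempty_fintype q
  let M : Matrix (n ⊕ l) (n ⊕ q) 𝕜 := fromBlocks A E C 0
  let N : Matrix (n ⊕ q) (n ⊕ q) 𝕜 := fromBlocks G 0 0 1
  have hMN : fromBlocks (A * G) E (C * G) 0 = M * N := by simp [M, N, fromBlocks_multiply]
  have hN : IsUnit N := by simpa [N, isUnit_iff_isUnit_det] using hG
  have hR : fromBlocks (G + Gᴴ - X) 0 0 R ≤ Nᴴ * fromBlocks X⁻¹ 0 0 R * N := by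
    simpa [N, fromBlocks_conjTranspose, fromBlocks_multiply] using
      fromBlocks_zero_le_fromBlocks_zero (add_conjTranspose_sub_le hX G) (le_refl R)
  have hS : fromBlocks Y 0 0 1 * fromBlocks (H + Hᴴ - Φ) 0 0 1 * fromBlocks Y 0 0 1 ≤
      (fromBlocks Y 0 0 1 : Matrix (n ⊕ l) (n ⊕ l) 𝕜) := by
    simpa [fromBlocks_multiply] using
      fromBlocks_zero_le_fromBlocks_zero (mul_add_conjTranspose_sub_mul_le hY hΦ) (le_refl 1)
  rw [boundedRealMatrix_eq_sub]
  refine posDef_sub_of_fromBlocks_mul (hMN ▸ h) hN hR ?_ hS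
  simp [IsHermitian, fromBlocks_conjTranspose, hY.isHermitian.eq]

end MatrixInequalities

section MarkovChains

section History

variable {Ω S R : Type*}

/-- The path `(ξ 0, …, ξ k)` of a process up to time `k`. A quantity is adapted to `ξ` at time `k`
when it factors through this map. -/
def history (ξ : ℕ → Ω → S) (k : ℕ) (ω : Ω) : Set.Iic k → S :=
  fun l ↦ ξ l ω

theorem history_eq_history_iff {ξ : ℕ → Ω → S} {k : ℕ} {ω ω' : Ω} :
    history ξ k ω = history ξ k ω' ↔ ∀ l ≤ k, ξ l ω = ξ l ω' := by
  simp [history, funext_iff]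

theorem history_factorsThrough_history_of_le (ξ : ℕ → Ω → S) {j k : ℕ} (hjk : j ≤ k) :
    (history ξ j).FactorsThrough (history ξ k) := fun ω ω' h ↦ by
  rw [history_eq_history_iff] at h ⊢
  exact fun l hl ↦ h l (hl.trans hjk)

theorem measurable_history [MeasurableSpace Ω] [MeasurableSpace S] {ξ : ℕ → Ω → S}
    (hξ : ∀ k, Measurable (ξ k)) (k : ℕ) : Measurable (history ξ k) :=
  measurable_pi_lambda _ fun l ↦ hξ l

theorem measurable_of_factorsThrough_history [MeasurableSpace Ω] [Finite S] [MeasurableSpace S]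
    [MeasurableSingletonClass S] {β : Type*} [MeasurableSpace β] {ξ : ℕ → Ω → S}
    (hξ : ∀ k, Measurable (ξ k)) {k : ℕ} {g : Ω → β} (hg : g.FactorsThrough (history ξ k)) :
    Measurable g := by
  cases isEmpty_or_nonempty Ω
  · exact measurable_of_empty g
  have : Nonempty β := Nonempty.map g ‹_›
  obtain ⟨g', rfl⟩ := (Function.factorsThrough_iff g).mp hg
  exact (measurable_of_finite g').comp (measurable_history hξ k)

theorem factorsThrough_history_of_step {ξ : ℕ → Ω → S} {θ : ℕ → Ω → R} {step : R → S → R}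
    (hzero : (θ 0).FactorsThrough (ξ 0))
    (hsucc : ∀ k ω, θ (k + 1) ω = step (θ k ω) (ξ (k + 1) ω)) (k : ℕ) :
    (θ k).FactorsThrough (history ξ k) := by
  intro ω ω' h
  rw [history_eq_history_iff] at h
  induction k with
  | zero => exact hzero (h 0 le_rfl)
  | succ k ih => rw [hsucc, hsucc, ih fun l hl ↦ h l (by omega), h (k + 1) le_rfl]

end History

namespace IsMarkovChain

variable {Ω S R : Type} {mΩ : MeasurableSpace Ω} {μ : Measure Ω}

theorem measure_history_inter [IsFiniteMeasure μ] {ξ : ℕ → Ω → S} {p : S → S → ℝ}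
    (hξ : IsMarkovChain μ ξ p) (k : ℕ) (h : Set.Iic k → S) (j : S) :
    μ {ω | history ξ k ω = h ∧ ξ (k + 1) ω = j} =
      ENNReal.ofReal (p (h ⟨k, Set.self_mem_Iic⟩) j) * μ {ω | history ξ k ω = h} := by
  let i : ℕ → S := fun l ↦ if hl : l ≤ k then h ⟨l, hl⟩ else j
  have hpath : ∀ ω, history ξ k ω = h ↔ ∀ l ≤ k, ξ l ω = i l := fun ω ↦ by
    simp +contextual [history, funext_iff, i]
  have hik : h ⟨k, Set.self_mem_Iic⟩ = i k := by simp [i]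
  simp only [hpath, hik, and_comm (b := ξ (k + 1) _ = j)]
  rw [← ENNReal.ofReal_toReal (measure_ne_top μ {ω | _ ∧ _}), hξ k j i,
    ENNReal.ofReal_mul' ENNReal.toReal_nonneg, ENNReal.ofReal_toReal (measure_ne_top _ _)]

theorem lintegral_succ [Fintype S] [MeasurableSpace S] [MeasurableSingletonClass S]
    [IsFiniteMeasure μ] {ξ : ℕ → Ω → S} {p : S → S → ℝ} (hξ : IsMarkovChain μ ξ p)
    (hmeas : ∀ k, Measurable (ξ k)) (k : ℕ) {g : S → Ω → ENNReal}
    (hg : ∀ j, (g j).FactorsThrough (history ξ k)) :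
    ∫⁻ ω, g (ξ (k + 1) ω) ω ∂μ = ∫⁻ ω, ∑ j, ENNReal.ofReal (p (ξ k ω) j) * g j ω ∂μ := by
  classical
  choose g' hg' using fun j ↦ (Function.factorsThrough_iff (g j)).mp (hg j)
  have hhist := measurable_history hmeas k
  calc ∫⁻ ω, g (ξ (k + 1) ω) ω ∂μ
      = ∫⁻ y, g' y.2 y.1 ∂μ.map fun ω ↦ (history ξ k ω, ξ (k + 1) ω) := by
        rw [lintegral_map (measurable_of_finite _) (hhist.prodMk (hmeas _))]
        simp [hg']
    _ = ∑ h, ∑ j, g' j h * μ {ω | history ξ k ω = h ∧ ξ (k + 1) ω = j} := by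
        rw [lintegral_fintype, Fintype.sum_prod_type]
        simp only [Measure.map_apply (hhist.prodMk (hmeas _)) (measurableSet_singleton _)]
        simp only [Set.preimage, Set.mem_singleton_iff, Prod.mk.injEq]
    _ = ∑ h, (∑ j, ENNReal.ofReal (p (h ⟨k, Set.self_mem_Iic⟩) j) * g' j h) *
          μ {ω | history ξ k ω = h} := by
        simp only [hξ.measure_history_inter, Finset.sum_mul]
        exact Finset.sum_congr rfl fun h _ ↦ Finset.sum_congr rfl fun j _ ↦ by ring
    _ = ∫⁻ h, ∑ j, ENNReal.ofReal (p (h ⟨k, Set.self_mem_Iic⟩) j) * g' j h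
          ∂μ.map (history ξ k) := by
        simp only [lintegral_fintype, Measure.map_apply hhist (measurableSet_singleton _)]
        simp only [Set.preimage, Set.mem_singleton_iff]
    _ = ∫⁻ ω, ∑ j, ENNReal.ofReal (p (ξ k ω) j) * g j ω ∂μ := by
        rw [lintegral_map (measurable_of_finite _) hhist]
        simp [hg', history]

theorem prodMk [MeasurableSpace R] [MeasurableSingletonClass R] [MeasurableSpace S]
    [MeasurableSingletonClass S] {r : ℕ → Ω → R} {s : ℕ → Ω → S} {p : R → R → ℝ} {q : S → S → ℝ}
    (hr : IsMarkovChain μ r p) (hs : IsMarkovChain μ s q)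
    (hrs : IndepFun (fun ω k ↦ r k ω) (fun ω k ↦ s k ω) μ) :
    IsMarkovChain μ (fun k ω ↦ (r k ω, s k ω)) fun i j ↦ p i.1 j.1 * q i.2 j.2 := by
  intro k j i
  have hpath {β : Type} [MeasurableSpace β] [MeasurableSingletonClass β] (y : ℕ → β) :
      MeasurableSet {x : ℕ → β | ∀ l ≤ k, x l = y l} := by
    simp only [Set.ofPred_forall]
    exact .iInter fun l ↦ .iInter fun _ ↦ measurable_pi_apply l (measurableSet_singleton _)
  have hpath_succ {β : Type} [MeasurableSpace β] [MeasurableSingletonClass β] (y : β)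
      (z : ℕ → β) : MeasurableSet {x : ℕ → β | x (k + 1) = y ∧ ∀ l ≤ k, x l = z l} := by
    have hy : MeasurableSet {x : ℕ → β | x (k + 1) = y} :=
      (measurableSet_singleton y).preimage (measurable_pi_apply (k + 1))
    exact hy.inter (hpath z)
  have hpast : (μ {ω | ∀ l ≤ k, (r l ω, s l ω) = i l}).toReal =
      (μ {ω | ∀ l ≤ k, r l ω = (i l).1}).toReal * (μ {ω | ∀ l ≤ k, s l ω = (i l).2}).toReal := by
    rw [← ENNReal.toReal_mul]
    refine congrArg _ (Eq.trans (congrArg μ ?_)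
      (hrs.measure_inter_preimage_eq_mul _ _ (hpath _) (hpath _)))
    ext ω
    simp [Prod.ext_iff, forall_and]
  have hnext : (μ {ω | (r (k + 1) ω, s (k + 1) ω) = j ∧ ∀ l ≤ k, (r l ω, s l ω) = i l}).toReal =
      (μ {ω | r (k + 1) ω = j.1 ∧ ∀ l ≤ k, r l ω = (i l).1}).toReal *
        (μ {ω | s (k + 1) ω = j.2 ∧ ∀ l ≤ k, s l ω = (i l).2}).toReal := by
    rw [← ENNReal.toReal_mul]
    refine congrArg _ (Eq.trans (congrArg μ ?_)
      (hrs.measure_inter_preimage_eq_mul _ _ (hpath_succ _ _) (hpath_succ _ _)))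
    ext ω
    simp [Prod.ext_iff, forall_and, and_and_and_comm]
  rw [hpast, hnext, hr k j.1 fun l ↦ (i l).1, hs k j.2 fun l ↦ (i l).2]
  ring

theorem lift {ξ : ℕ → Ω → S} {p : S → S → ℝ} (hξ : IsMarkovChain μ ξ p) {θ : ℕ → Ω → R}
    {out : R → S} {step : R → S → R} [DecidableEq R] (hzero : (θ 0).FactorsThrough (ξ 0))
    (hsucc : ∀ k ω, θ (k + 1) ω = step (θ k ω) (ξ (k + 1) ω)) (hout : ∀ k ω, out (θ k ω) = ξ k ω) :
    IsMarkovChain μ θ fun i j ↦ if step i (out j) = j then p (out i) (out j) else 0 := by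
  intro k j i
  by_cases hne : ∃ ω₀, ∀ l ≤ k, θ l ω₀ = i l
  swap
  · simp only [not_exists] at hne
    simp [hne]
  obtain ⟨ω₀, hω₀⟩ := hne
  have hpast ω : (∀ l ≤ k, θ l ω = i l) ↔ ∀ l ≤ k, ξ l ω = out (i l) := by
    refine ⟨fun h l hl ↦ by rw [← h l hl, hout], fun h l hl ↦ ?_⟩
    rw [← hω₀ l hl]
    refine factorsThrough_history_of_step hzero hsucc l (history_eq_history_iff.mpr fun m hm ↦ ?_)
    rw [h m (hm.trans hl), ← hω₀ m (hm.trans hl), hout]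
  have hnext ω : (θ (k + 1) ω = j ∧ ∀ l ≤ k, θ l ω = i l) ↔
      step (i k) (out j) = j ∧ ξ (k + 1) ω = out j ∧ ∀ l ≤ k, ξ l ω = out (i l) := by
    rw [← hpast]
    constructor
    · rintro ⟨rfl, h⟩
      exact ⟨by rw [hout, ← h k le_rfl, ← hsucc], (hout _ _).symm, h⟩
    · rintro ⟨hstep, hj, h⟩
      exact ⟨by rw [hsucc, h k le_rfl, hj, hstep], h⟩
  simp only [hnext]
  simp only [hpast]
  split_ifs with hstep
  · simpa [hstep] using hξ k (out j) (out ∘ i)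
  · simp [hstep]

end IsMarkovChain

end MarkovChains

section StochasticDissipation

theorem tsum_le_tsum_of_succ_add_le {u y s : ℕ → ENNReal} (h0 : u 0 = 0)
    (hsucc : ∀ k, u (k + 1) + y k ≤ u k + s k) : ∑' k, y k ≤ ∑' k, s k := by
  have hpartial (K : ℕ) : u K + ∑ k ∈ Finset.range K, y k ≤ ∑ k ∈ Finset.range K, s k := by
    induction K with
    | zero => simp [h0]
    | succ K ih =>
      calc u (K + 1) + ∑ k ∈ Finset.range (K + 1), y k
          = u (K + 1) + y K + ∑ k ∈ Finset.range K, y k := by rw [Finset.sum_range_succ]; ring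
        _ ≤ u K + s K + ∑ k ∈ Finset.range K, y k := by gcongr ?_ + _; exact hsucc K
        _ = u K + ∑ k ∈ Finset.range K, y k + s K := by ring
        _ ≤ ∑ k ∈ Finset.range (K + 1), s k := by rw [Finset.sum_range_succ]; gcongr
  exact ENNReal.tsum_le_of_sum_range_le fun K ↦
    (le_add_self.trans (hpartial K)).trans (ENNReal.sum_le_tsum _)

variable {Ω Θ : Type} {n q : ℕ} {θ : ℕ → Ω → Θ} {A : Θ → Matrix (Fin n) (Fin n) ℝ}
  {E : Θ → Matrix (Fin n) (Fin q) ℝ} {w : ℕ → Ω → Fin q → ℝ} {x₀ : Fin n → ℝ}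

theorem traj_factorsThrough_history (hw : ∀ k, (w k).FactorsThrough (history θ k)) (k : ℕ) :
    (traj A E θ w x₀ k).FactorsThrough (history θ k) := by
  induction k with
  | zero => exact fun _ _ _ ↦ rfl
  | succ k ih =>
    intro ω ω' h
    have hk := history_factorsThrough_history_of_le θ k.le_succ h
    simp only [traj, ih hk, hw k hk, history_eq_history_iff.mp hk k le_rfl]

variable [Fintype Θ] [MeasurableSpace Θ] [MeasurableSingletonClass Θ] {mΩ : MeasurableSpace Ω}
  {μ : Measure Ω} [IsFiniteMeasure μ] {p : Θ → Θ → ℝ} {𝔛 : Set Θ}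
  {V y : Θ → (Fin n → ℝ) → ENNReal} {s : (Fin q → ℝ) → ENNReal} {a : ENNReal}

theorem lintegral_storage_succ_add_le (hθ : IsMarkovChain μ θ p) (hmeas : ∀ k, Measurable (θ k))
    (hmem : ∀ k ω, θ k ω ∈ 𝔛) (hw : ∀ k, (w k).FactorsThrough (history θ k))
    (hV : ∀ χ ∈ 𝔛, ∀ x v, ∑ χ', ENNReal.ofReal (p χ χ') * V χ' (A χ *ᵥ x + E χ *ᵥ v) + y χ x ≤
      a * V χ x + s v) (k : ℕ) :
    ∫⁻ ω, V (θ (k + 1) ω) (traj A E θ w x₀ (k + 1) ω) ∂μ +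
        ∫⁻ ω, y (θ k ω) (traj A E θ w x₀ k ω) ∂μ ≤
      a * ∫⁻ ω, V (θ k ω) (traj A E θ w x₀ k ω) ∂μ + ∫⁻ ω, s (w k ω) ∂μ := by
  have htraj := traj_factorsThrough_history (A := A) (E := E) (x₀ := x₀) hw
  have hadapted (U : Θ → (Fin n → ℝ) → (Fin q → ℝ) → ENNReal) :
      (fun ω ↦ U (θ k ω) (traj A E θ w x₀ k ω) (w k ω)).FactorsThrough (history θ k) :=
    fun _ _ h ↦ by
      simp only [history_eq_history_iff.mp h k le_rfl, htraj k h, hw k h]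
  have hmeasurable (U : Θ → (Fin n → ℝ) → (Fin q → ℝ) → ENNReal) :=
    measurable_of_factorsThrough_history hmeas (hadapted U)
  calc ∫⁻ ω, V (θ (k + 1) ω) (traj A E θ w x₀ (k + 1) ω) ∂μ +
        ∫⁻ ω, y (θ k ω) (traj A E θ w x₀ k ω) ∂μ
      = ∫⁻ ω, ∑ χ', ENNReal.ofReal (p (θ k ω) χ') *
            V χ' (A (θ k ω) *ᵥ traj A E θ w x₀ k ω + E (θ k ω) *ᵥ w k ω) +
          y (θ k ω) (traj A E θ w x₀ k ω) ∂μ := by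
        rw [lintegral_add_right _ (hmeasurable fun χ x _ ↦ y χ x), ← hθ.lintegral_succ hmeas k
          fun χ' ↦ hadapted fun χ x v ↦ V χ' (A χ *ᵥ x + E χ *ᵥ v)]
        rfl
    _ ≤ ∫⁻ ω, a * V (θ k ω) (traj A E θ w x₀ k ω) + s (w k ω) ∂μ :=
        lintegral_mono fun ω ↦ hV _ (hmem k ω) _ _
    _ = a * ∫⁻ ω, V (θ k ω) (traj A E θ w x₀ k ω) ∂μ + ∫⁻ ω, s (w k ω) ∂μ := by
        rw [lintegral_add_right _ (hmeasurable fun _ _ v ↦ s v),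
          lintegral_const_mul _ (hmeasurable fun χ x _ ↦ V χ x)]

theorem lintegral_storage_le_pow_mul (hθ : IsMarkovChain μ θ p) (hmeas : ∀ k, Measurable (θ k))
    (hmem : ∀ k ω, θ k ω ∈ 𝔛)
    (hV : ∀ χ ∈ 𝔛, ∀ x v, ∑ χ', ENNReal.ofReal (p χ χ') * V χ' (A χ *ᵥ x + E χ *ᵥ v) + y χ x ≤
      a * V χ x + s v) (hs : s 0 = 0) (k : ℕ) :
    ∫⁻ ω, V (θ k ω) (traj A E θ (fun _ _ ↦ 0) x₀ k ω) ∂μ ≤ a ^ k * ∫⁻ ω, V (θ 0 ω) x₀ ∂μ := by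
  induction k with
  | zero => simp [traj]
  | succ k ih =>
    have hstep := lintegral_storage_succ_add_le (x₀ := x₀) hθ hmeas hmem
      (w := fun _ _ ↦ 0) (fun _ _ _ _ ↦ rfl) hV k
    calc _ ≤ a * ∫⁻ ω, V (θ k ω) (traj A E θ (fun _ _ ↦ 0) x₀ k ω) ∂μ := by
          simpa [hs] using le_self_add.trans hstep
      _ ≤ a * (a ^ k * ∫⁻ ω, V (θ 0 ω) x₀ ∂μ) := by gcongr
      _ = a ^ (k + 1) * ∫⁻ ω, V (θ 0 ω) x₀ ∂μ := by ring

theorem tsum_lintegral_output_le_tsum_lintegral_supply (hθ : IsMarkovChain μ θ p)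
    (hmeas : ∀ k, Measurable (θ k)) (hmem : ∀ k ω, θ k ω ∈ 𝔛)
    (hw : ∀ k, (w k).FactorsThrough (history θ k))
    (hV : ∀ χ ∈ 𝔛, ∀ x v, ∑ χ', ENNReal.ofReal (p χ χ') * V χ' (A χ *ᵥ x + E χ *ᵥ v) + y χ x ≤
      V χ x + s v) (hV0 : ∀ χ ∈ 𝔛, V χ 0 = 0) :
    ∑' k, ∫⁻ ω, y (θ k ω) (traj A E θ w 0 k ω) ∂μ ≤ ∑' k, ∫⁻ ω, s (w k ω) ∂μ := by
  refine tsum_le_tsum_of_succ_add_le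
    (u := fun k ↦ ∫⁻ ω, V (θ k ω) (traj A E θ w 0 k ω) ∂μ) ?_ fun k ↦ ?_
  · simp [traj, hV0 _ (hmem 0 _)]
  · simpa using lintegral_storage_succ_add_le (a := 1) hθ hmeas hmem hw (by simpa using hV) k

end StochasticDissipation

section BoundedReal

open scoped MatrixOrder

theorem dotProduct_mulVec_le_of_le {m : Type*} [Fintype m] {M N : Matrix m m ℝ} (h : M ≤ N)
    (x : m → ℝ) : x ⬝ᵥ M *ᵥ x ≤ x ⬝ᵥ N *ᵥ x := by
  simpa [sub_mulVec, dotProduct_sub] using (Matrix.le_iff.mp h).dotProduct_mulVec_nonneg x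

theorem dotProduct_conjTranspose_mul_mul_mulVec {m n : Type*} [Fintype m] [Fintype n]
    (M : Matrix m n ℝ) (S : Matrix m m ℝ) (y : n → ℝ) :
    y ⬝ᵥ (Mᴴ * S * M) *ᵥ y = (M *ᵥ y) ⬝ᵥ S *ᵥ (M *ᵥ y) := by
  rw [← mulVec_mulVec, ← mulVec_mulVec, dotProduct_mulVec, conjTranspose_eq_transpose_of_trivial,
    vecMul_transpose]

theorem dotProduct_boundedRealMatrix_mulVec {n q l : Type*} [Fintype n] [Fintype q] [Fintype l]
    (W Y : Matrix n n ℝ) (R : Matrix q q ℝ) (A : Matrix n n ℝ) (E : Matrix n q ℝ)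
    (C : Matrix l n ℝ) (x : n → ℝ) (v : q → ℝ) :
    Sum.elim x v ⬝ᵥ boundedRealMatrix W Y R A E C *ᵥ Sum.elim x v =
      x ⬝ᵥ W *ᵥ x + v ⬝ᵥ R *ᵥ v - (A *ᵥ x + E *ᵥ v) ⬝ᵥ Y *ᵥ (A *ᵥ x + E *ᵥ v) -
        (C *ᵥ x) ⬝ᵥ (C *ᵥ x) := by
  classical
  rw [boundedRealMatrix_eq_sub, sub_mulVec, dotProduct_sub,
    dotProduct_conjTranspose_mul_mul_mulVec]
  simp [fromBlocks_mulVec, sub_sub]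

theorem sqE_eq_ofReal_dotProduct {d : ℕ} (v : Fin d → ℝ) : sqE v = ENNReal.ofReal (v ⬝ᵥ v) := by
  simp [sqE, dotProduct, sq]

variable {n q ℓ : ℕ} {Θ : Type}

/-- The mode-dependent quadratic storage function `V χ x = xᵀ W_χ x`, as an extended nonnegative
real. -/
def storage (W : Θ → Matrix (Fin n) (Fin n) ℝ) (χ : Θ) (x : Fin n → ℝ) : ENNReal :=
  ENNReal.ofReal (x ⬝ᵥ W χ *ᵥ x)

variable [Fintype Θ]

/-- `W` certifies, through the bounded real lemma on the mode set `𝔛`, that the squared `H∞` norm of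
the jump system `(A, E, C)` with transition probabilities `p` is less than `γ`. -/
structure IsBoundedReal (𝔛 : Set Θ) (p : Θ → Θ → ℝ) (A : Θ → Matrix (Fin n) (Fin n) ℝ)
    (E : Θ → Matrix (Fin n) (Fin q) ℝ) (C : Θ → Matrix (Fin ℓ) (Fin n) ℝ) (γ : ℝ)
    (W : Θ → Matrix (Fin n) (Fin n) ℝ) : Prop where
  posDef : ∀ χ ∈ 𝔛, (W χ).PosDef
  dissipative : ∀ χ ∈ 𝔛, (boundedRealMatrix (W χ) (∑ χ', p χ χ' • W χ') (γ • 1) (A χ) (E χ)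
    (C χ)).PosDef

/-- The margin `ε` in the matrix inequalities of `IsBoundedReal` that yields both the decay rate
`1 - ε` of the storage and the gain `γ - ε`. -/
structure IsBoundedRealMargin (𝔛 : Set Θ) (p : Θ → Θ → ℝ) (A : Θ → Matrix (Fin n) (Fin n) ℝ)
    (E : Θ → Matrix (Fin n) (Fin q) ℝ) (C : Θ → Matrix (Fin ℓ) (Fin n) ℝ) (γ : ℝ)
    (W : Θ → Matrix (Fin n) (Fin n) ℝ) (ε : ℝ) : Prop where
  pos : 0 < ε
  lt_one : ε < 1
  lt_gain : ε < γ
  smul_one_le : ∀ χ ∈ 𝔛, ε • 1 ≤ W χ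
  smul_le_one : ∀ χ ∈ 𝔛, ε • W χ ≤ 1
  smul_le_boundedRealMatrix : ∀ χ ∈ 𝔛, ε • fromBlocks (W χ) 0 0 1 ≤
    boundedRealMatrix (W χ) (∑ χ', p χ χ' • W χ') (γ • 1) (A χ) (E χ) (C χ)

variable {𝔛 : Set Θ} {p : Θ → Θ → ℝ} {A : Θ → Matrix (Fin n) (Fin n) ℝ}
  {E : Θ → Matrix (Fin n) (Fin q) ℝ} {C : Θ → Matrix (Fin ℓ) (Fin n) ℝ} {γ ε : ℝ}
  {W : Θ → Matrix (Fin n) (Fin n) ℝ}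

open Filter Topology in
theorem IsBoundedReal.exists_margin (hW : IsBoundedReal 𝔛 p A E C γ W) (hγ : 0 < γ) :
    ∃ ε, IsBoundedRealMargin 𝔛 p A E C γ W ε := by
  have hlt {r : ℝ} (hr : 0 < r) : ∀ᶠ ε : ℝ in 𝓝[>] 0, ε < r :=
    nhdsWithin_le_nhds (Iio_mem_nhds hr)
  have hall {φ : Θ → ℝ → Prop} (hφ : ∀ χ ∈ 𝔛, ∀ᶠ ε : ℝ in 𝓝[>] 0, φ χ ε) :
      ∀ᶠ ε : ℝ in 𝓝[>] 0, ∀ χ ∈ 𝔛, φ χ ε :=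
    (Set.toFinite 𝔛).eventually_all.mpr hφ
  have hlow := hall fun χ hχ ↦ eventually_smul_le (hW.posDef χ hχ) isHermitian_one
  have hup := hall fun χ hχ ↦ eventually_smul_le (n := Fin n) PosDef.one
    (hW.posDef χ hχ).isHermitian
  have hdiss := hall fun χ hχ ↦ eventually_smul_le (hW.dissipative χ hχ)
    (N := fromBlocks (W χ) 0 0 1)
    ((hW.posDef χ hχ).isHermitian.fromBlocks (by simp) isHermitian_one)
  obtain ⟨ε, hpos, h1, hεγ, hlow, hup, hdiss⟩ :=
    (eventually_mem_nhdsWithin.and ((hlt one_pos).and ((hlt hγ).and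
      (hlow.and (hup.and hdiss))))).exists
  exact ⟨ε, hpos, h1, hεγ, hlow, hup, hdiss⟩

namespace IsBoundedRealMargin

theorem ofReal_mul_sqE_le_storage (hε : IsBoundedRealMargin 𝔛 p A E C γ W ε) {χ : Θ} (hχ : χ ∈ 𝔛)
    (x : Fin n → ℝ) : ENNReal.ofReal ε * sqE x ≤ storage W χ x := by
  rw [sqE_eq_ofReal_dotProduct, ← ENNReal.ofReal_mul hε.pos.le]
  refine ENNReal.ofReal_le_ofReal ?_
  simpa [smul_mulVec] using dotProduct_mulVec_le_of_le (hε.smul_one_le χ hχ) x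

theorem ofReal_mul_storage_le_sqE (hε : IsBoundedRealMargin 𝔛 p A E C γ W ε) {χ : Θ} (hχ : χ ∈ 𝔛)
    (x : Fin n → ℝ) : ENNReal.ofReal ε * storage W χ x ≤ sqE x := by
  rw [sqE_eq_ofReal_dotProduct, storage, ← ENNReal.ofReal_mul hε.pos.le]
  refine ENNReal.ofReal_le_ofReal ?_
  simpa [smul_mulVec] using dotProduct_mulVec_le_of_le (hε.smul_le_one χ hχ) x

theorem sum_storage_add_sqE_le (hε : IsBoundedRealMargin 𝔛 p A E C γ W ε)
    (hp : ∀ χ χ', 0 ≤ p χ χ') (hpX : ∀ χ, ∀ χ' ∉ 𝔛, p χ χ' = 0) {χ : Θ} (hχ : χ ∈ 𝔛)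
    (x : Fin n → ℝ) (v : Fin q → ℝ) :
    ∑ χ', ENNReal.ofReal (p χ χ') * storage W χ' (A χ *ᵥ x + E χ *ᵥ v) + sqE (C χ *ᵥ x) ≤
      ENNReal.ofReal (1 - ε) * storage W χ x + ENNReal.ofReal (γ - ε) * sqE v := by
  have hnonneg {d : ℕ} (z : Fin d → ℝ) : 0 ≤ z ⬝ᵥ z := by
    simpa using dotProduct_star_self_nonneg z
  have hWnonneg : ∀ χ ∈ 𝔛, ∀ z, 0 ≤ z ⬝ᵥ W χ *ᵥ z := fun χ hχ z ↦
    (mul_nonneg hε.pos.le (hnonneg z)).trans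
      (by simpa [smul_mulVec] using dotProduct_mulVec_le_of_le (hε.smul_one_le χ hχ) z)
  have hterm (z : Fin n → ℝ) (χ' : Θ) : 0 ≤ p χ χ' * (z ⬝ᵥ W χ' *ᵥ z) := by
    by_cases hχ' : χ' ∈ 𝔛
    · exact mul_nonneg (hp χ χ') (hWnonneg χ' hχ' z)
    · simp [hpX χ χ' hχ']
  have hdiss := dotProduct_mulVec_le_of_le (hε.smul_le_boundedRealMatrix χ hχ) (Sum.elim x v)
  simp only [dotProduct_boundedRealMatrix_mulVec, sum_mulVec, dotProduct_sum, smul_mulVec,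
    dotProduct_smul, smul_eq_mul, one_mulVec, fromBlocks_mulVec, Sum.elim_comp_inl,
    Sum.elim_comp_inr, zero_mulVec, add_zero, zero_add, sumElim_dotProduct_sumElim] at hdiss
  simp only [storage, sqE_eq_ofReal_dotProduct, ← ENNReal.ofReal_mul (hp _ _)]
  rw [← ENNReal.ofReal_sum_of_nonneg fun χ' _ ↦ hterm _ χ',
    ← ENNReal.ofReal_add (Finset.sum_nonneg fun χ' _ ↦ hterm _ χ') (hnonneg _),
    ← ENNReal.ofReal_mul (sub_nonneg.mpr hε.lt_one.le),
    ← ENNReal.ofReal_mul (sub_nonneg.mpr hε.lt_gain.le),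
    ← ENNReal.ofReal_add (mul_nonneg (sub_nonneg.mpr hε.lt_one.le) (hWnonneg χ hχ x))
      (mul_nonneg (sub_nonneg.mpr hε.lt_gain.le) (hnonneg v))]
  exact ENNReal.ofReal_le_ofReal (by linarith)

end IsBoundedRealMargin

namespace IsBoundedReal

variable [MeasurableSpace Θ] [MeasurableSingletonClass Θ]

theorem exists_lintegral_sqE_traj_le (hW : IsBoundedReal 𝔛 p A E C γ W) (hγ : 0 < γ)
    (hp : ∀ χ χ', 0 ≤ p χ χ') (hpX : ∀ χ, ∀ χ' ∉ 𝔛, p χ χ' = 0) :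
    ∃ c : ℝ, 0 < c ∧ ∃ lam : ℝ, 0 ≤ lam ∧ lam < 1 ∧
      ∀ {Ω : Type} [MeasurableSpace Ω] (μ : Measure Ω) [IsProbabilityMeasure μ] (θ : ℕ → Ω → Θ),
        IsMarkovChain μ θ p → (∀ k, Measurable (θ k)) → (∀ k ω, θ k ω ∈ 𝔛) →
        ∀ (x₀ : Fin n → ℝ) (k : ℕ), ∫⁻ ω, sqE (traj A E θ (fun _ _ ↦ 0) x₀ k ω) ∂μ ≤
          ENNReal.ofReal (c * lam ^ k * ∑ i, x₀ i ^ 2) := by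
  obtain ⟨ε, hε⟩ := hW.exists_margin hγ
  have hε1 : 0 ≤ 1 - ε := sub_nonneg.mpr hε.lt_one.le
  have hεinv : 0 < ε⁻¹ := inv_pos.mpr hε.pos
  refine ⟨ε⁻¹ ^ 2, by positivity, 1 - ε, hε1, by linarith [hε.pos],
    fun {Ω} _ μ _ θ hθ hmeas hmem x₀ k ↦ ?_⟩
  have hcancel {a b : ENNReal} (h : ENNReal.ofReal ε * a ≤ b) : a ≤ ENNReal.ofReal ε⁻¹ * b := by
    calc a = ENNReal.ofReal ε⁻¹ * (ENNReal.ofReal ε * a) := by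
          rw [← mul_assoc, ← ENNReal.ofReal_mul hεinv.le, inv_mul_cancel₀ hε.pos.ne',
            ENNReal.ofReal_one, one_mul]
      _ ≤ ENNReal.ofReal ε⁻¹ * b := by gcongr
  let x := traj A E θ (fun _ _ ↦ 0) x₀
  calc ∫⁻ ω, sqE (x k ω) ∂μ
      ≤ ∫⁻ ω, ENNReal.ofReal ε⁻¹ * storage W (θ k ω) (x k ω) ∂μ :=
        lintegral_mono fun ω ↦ hcancel (hε.ofReal_mul_sqE_le_storage (hmem k ω) _)
    _ = ENNReal.ofReal ε⁻¹ * ∫⁻ ω, storage W (θ k ω) (x k ω) ∂μ :=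
        lintegral_const_mul' _ _ ENNReal.ofReal_ne_top
    _ ≤ ENNReal.ofReal ε⁻¹ * (ENNReal.ofReal (1 - ε) ^ k * ∫⁻ ω, storage W (θ 0 ω) x₀ ∂μ) := by
        gcongr
        exact lintegral_storage_le_pow_mul hθ hmeas hmem
          (fun χ hχ ↦ hε.sum_storage_add_sqE_le hp hpX hχ) (by simp [sqE]) k
    _ ≤ ENNReal.ofReal ε⁻¹ * (ENNReal.ofReal (1 - ε) ^ k *
          ∫⁻ _, ENNReal.ofReal ε⁻¹ * sqE x₀ ∂μ) := by
        gcongr with ω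
        exact hcancel (hε.ofReal_mul_storage_le_sqE (hmem 0 ω) x₀)
    _ = ENNReal.ofReal (ε⁻¹ ^ 2 * (1 - ε) ^ k * ∑ i, x₀ i ^ 2) := by
        rw [lintegral_const, measure_univ, mul_one, sqE, ENNReal.ofReal_mul (by positivity),
          ENNReal.ofReal_mul (by positivity), ENNReal.ofReal_pow hεinv.le, ENNReal.ofReal_pow hε1]
        ring

theorem exists_tsum_lintegral_sqE_output_le (hW : IsBoundedReal 𝔛 p A E C γ W) (hγ : 0 < γ)
    (hp : ∀ χ χ', 0 ≤ p χ χ') (hpX : ∀ χ, ∀ χ' ∉ 𝔛, p χ χ' = 0) :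
    ∃ c : ℝ, 0 ≤ c ∧ c < γ ∧
      ∀ {Ω : Type} [MeasurableSpace Ω] (μ : Measure Ω) [IsFiniteMeasure μ] (θ : ℕ → Ω → Θ),
        IsMarkovChain μ θ p → (∀ k, Measurable (θ k)) → (∀ k ω, θ k ω ∈ 𝔛) →
        ∀ w : ℕ → Ω → Fin q → ℝ, (∀ k, (w k).FactorsThrough (history θ k)) →
          ∑' k, ∫⁻ ω, sqE (C (θ k ω) *ᵥ traj A E θ w 0 k ω) ∂μ ≤
            ENNReal.ofReal c * ∑' k, ∫⁻ ω, sqE (w k ω) ∂μ := by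
  obtain ⟨ε, hε⟩ := hW.exists_margin hγ
  have hεγ := hε.lt_gain
  have hlam : ENNReal.ofReal (1 - ε) ≤ 1 := ENNReal.ofReal_le_one.mpr (by linarith [hε.pos])
  refine ⟨γ - ε, by linarith, by linarith [hε.pos], fun μ _ θ hθ hmeas hmem w hw ↦ ?_⟩
  calc ∑' k, ∫⁻ ω, sqE (C (θ k ω) *ᵥ traj A E θ w 0 k ω) ∂μ
      ≤ ∑' k, ∫⁻ ω, ENNReal.ofReal (γ - ε) * sqE (w k ω) ∂μ :=
        tsum_lintegral_output_le_tsum_lintegral_supply (V := storage W)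
          (y := fun χ x ↦ sqE (C χ *ᵥ x)) (s := fun v ↦ ENNReal.ofReal (γ - ε) * sqE v)
          hθ hmeas hmem hw
          (fun χ hχ x v ↦ (hε.sum_storage_add_sqE_le hp hpX hχ x v).trans
            (by gcongr; exact mul_le_of_le_one_left' hlam))
          (fun χ _ ↦ by simp [storage])
    _ = ENNReal.ofReal (γ - ε) * ∑' k, ∫⁻ ω, sqE (w k ω) ∂μ := by
        simp only [lintegral_const_mul' _ _ ENNReal.ofReal_ne_top, ENNReal.tsum_mul_left]

end IsBoundedReal

end BoundedReal

section ExtendedChain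

variable {NN MM T : ℕ} [NeZero T] {P : Matrix (Fin NN) (Fin NN) ℝ}
  {Q : Matrix (Fin MM) (Fin MM) ℝ} {f : Fin MM → Bool}

theorem pbar_nonneg (hP : ∀ i j, 0 ≤ P i j) (hQ : ∀ i j, 0 ≤ Q i j) (χ χ' : XT NN MM T) :
    0 ≤ pbar P Q f χ χ' := by
  refine mul_nonneg (mul_nonneg ?_ (hP _ _)) (hQ _ _)
  split_ifs <;> simp

theorem pbar_eq_zero_of_not_inX (χ : XT NN MM T) {χ' : XT NN MM T} (hχ' : ¬ inX f χ') :
    pbar P Q f χ χ' = 0 := by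
  simp only [inX, Classical.not_imp] at hχ'
  simp [pbar, hχ'.1, hχ'.2]

theorem Fop_eq_sum {n : ℕ} (Z : XT NN MM T → XT NN MM T → Matrix (Fin n) (Fin n) ℝ)
    (χ : XT NN MM T) : Fop P Q f Z χ = ∑ χ', pbar P Q f χ χ' • Z χ χ' := by
  refine Finset.sum_congr rfl fun χ' _ ↦ ?_
  split_ifs with hχ'
  · rfl
  · rw [pbar_eq_zero_of_not_inX χ hχ', zero_smul]

/-- The successor of the extended state `χ` when the pair `(r, s)` moves to `c`: the memory
`(σ, ρ)` is reset by an observation, and otherwise only the clock `ρ` advances. -/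
def extendedStep (f : Fin MM → Bool) (χ : XT NN MM T) (c : Fin NN × Fin MM) : XT NN MM T :=
  if f c.2 then (c.1, c.2, c.1, 0) else (c.1, c.2, χ.2.2.1, χ.2.2.2 + 1)

theorem pbar_eq_ite_extendedStep (χ χ' : XT NN MM T) :
    pbar P Q f χ χ' = if extendedStep f χ (χ'.1, χ'.2.1) = χ' then
      P χ.1 χ'.1 * Q χ.2.1 χ'.2.1 else 0 := by
  obtain ⟨a, b, g, d⟩ := χ'
  by_cases hb : f b <;> simp [pbar, extendedStep, hb, eq_comm, ite_mul]

theorem intToFin_add_one (a : ℤ) : intToFin T (a + 1) = intToFin T a + 1 := by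
  have hT : (T : ℤ) ≠ 0 := by exact_mod_cast NeZero.ne T
  apply Fin.ext
  rw [Fin.val_add, intToFin, intToFin, Fin.val_one', Nat.add_mod_mod]
  zify
  rw [Int.toNat_of_nonneg (Int.emod_nonneg _ hT), Int.toNat_of_nonneg (Int.emod_nonneg _ hT),
    Int.emod_add_emod]

variable {Ω : Type} (r : ℕ → Ω → Fin NN) (s : ℕ → Ω → Fin MM) (τ₀ : ℤ) (σ₀ : Fin NN)

theorem rbarProc_of_observed {k : ℕ} {ω : Ω} (h : f (s k ω)) :
    rbarProc r s f τ₀ σ₀ k ω = ((r k ω, s k ω, r k ω, 0) : XT NN MM T) := by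
  have hex : ∃ j ≤ k, f (s j ω) := ⟨k, le_rfl, h⟩
  have hlast : Nat.findGreatest (fun j ↦ f (s j ω)) k = k := Nat.findGreatest_eq h
  simp [rbarProc, sigmaProc, rhoProc, tauZ, hex, hlast, intToFin]

theorem rbarProc_succ_of_not_observed {k : ℕ} {ω : Ω} (h : ¬ f (s (k + 1) ω)) :
    (rbarProc r s f τ₀ σ₀ (k + 1) ω : XT NN MM T) =
      (r (k + 1) ω, s (k + 1) ω, sigmaProc r s f σ₀ k ω, rhoProc s f τ₀ k ω + 1) := by
  have hex : (∃ j ≤ k + 1, f (s j ω)) ↔ ∃ j ≤ k, f (s j ω) := by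
    simp [Nat.le_succ_iff, or_and_right, exists_or, h]
  have hlast : Nat.findGreatest (fun j ↦ f (s j ω)) (k + 1) =
      Nat.findGreatest (fun j ↦ f (s j ω)) k := Nat.findGreatest_of_not h
  have hclock (t : ℤ) : intToFin T ((k + 1 : ℕ) - t) = intToFin T (k - t) + 1 := by
    rw [← intToFin_add_one]
    congr 1
    push_cast
    ring
  simp only [rbarProc, sigmaProc, rhoProc, tauZ, hex, hlast, hclock]

theorem rbarProc_succ (k : ℕ) (ω : Ω) :
    (rbarProc r s f τ₀ σ₀ (k + 1) ω : XT NN MM T) =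
      extendedStep f (rbarProc r s f τ₀ σ₀ k ω) (r (k + 1) ω, s (k + 1) ω) := by
  by_cases h : f (s (k + 1) ω)
  · rw [rbarProc_of_observed r s τ₀ σ₀ h, extendedStep, if_pos h]
  · rw [rbarProc_succ_of_not_observed r s τ₀ σ₀ h, extendedStep, if_neg h]
    rfl

theorem rbarProc_inX (k : ℕ) (ω : Ω) : inX f (rbarProc r s f τ₀ σ₀ k ω : XT NN MM T) := by
  intro h
  rw [rbarProc_of_observed r s τ₀ σ₀ h]
  exact ⟨rfl, rfl⟩

theorem rbarProc_zero_factorsThrough : (rbarProc r s f τ₀ σ₀ 0 : Ω → XT NN MM T).FactorsThrough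
    fun ω ↦ (r 0 ω, s 0 ω) := by
  intro ω ω' h
  simp only [Prod.mk.injEq] at h
  simp [rbarProc, sigmaProc, rhoProc, tauZ, h]

theorem measurable_rbarProc [MeasurableSpace Ω] {r : ℕ → Ω → Fin NN} {s : ℕ → Ω → Fin MM}
    (hr : ∀ k, Measurable (r k)) (hs : ∀ k, Measurable (s k)) (k : ℕ) :
    Measurable (rbarProc r s f τ₀ σ₀ k : Ω → XT NN MM T) :=
  measurable_of_factorsThrough_history (fun k ↦ (hr k).prodMk (hs k))
    (factorsThrough_history_of_step (rbarProc_zero_factorsThrough r s τ₀ σ₀)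
      (rbarProc_succ r s τ₀ σ₀) k)

theorem rbarProc_isMarkovChain {_ : MeasurableSpace Ω} {μ : Measure Ω} {r : ℕ → Ω → Fin NN}
    {s : ℕ → Ω → Fin MM} (hr : IsMarkovChain μ r fun i j ↦ P i j)
    (hs : IsMarkovChain μ s fun i j ↦ Q i j)
    (hrs : IndepFun (fun ω k ↦ r k ω) (fun ω k ↦ s k ω) μ) :
    IsMarkovChain μ (rbarProc r s f τ₀ σ₀ : ℕ → Ω → XT NN MM T) (pbar P Q f) := by
  convert (hr.prodMk hs hrs).lift (out := fun χ : XT NN MM T ↦ (χ.1, χ.2.1))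
    (rbarProc_zero_factorsThrough r s τ₀ σ₀) (rbarProc_succ r s τ₀ σ₀) fun _ _ ↦ rfl using 3
  exact pbar_eq_ite_extendedStep _ _

theorem factorsThrough_history_rbarProc (S : MJLSReal NN MM P Q) {k : ℕ} {β : Type*}
    [MeasurableSpace β] [MeasurableSingletonClass β] {w : S.Ω → β}
    (hw : Measurable[sigFiltSigma S k] w) :
    w.FactorsThrough (history (rbarProc S.r S.s f τ₀ σ₀ : ℕ → S.Ω → XT NN MM T) k) := by
  let past : S.Ω → Set.Iic k → XT NN MM T := history (rbarProc S.r S.s f τ₀ σ₀) k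
  have hcomap {d : ℕ} (π : (Set.Iic k → XT NN MM T) → Fin d) :
      MeasurableSpace.comap (π ∘ past) inferInstance ≤
        MeasurableSpace.comap past inferInstance := by
    rw [← MeasurableSpace.comap_comp]
    exact MeasurableSpace.comap_mono (measurable_of_finite π).comap_le
  have hle : sigFiltSigma S k ≤ MeasurableSpace.comap past inferInstance := by
    refine iSup₂_le fun l hl ↦ ?_
    have hlk : l ∈ Set.Iic k := by simpa [Nat.lt_succ_iff] using hl
    exact sup_le (hcomap fun h ↦ (h ⟨l, hlk⟩).1) (hcomap fun h ↦ (h ⟨l, hlk⟩).2.1)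
  exact (hw.mono hle le_rfl).factorsThrough

end ExtendedChain

section Synthesis

variable {NN MM T n m q ℓ : ℕ} [NeZero T] {P : Matrix (Fin NN) (Fin NN) ℝ}
  {Q : Matrix (Fin MM) (Fin MM) ℝ} {f : Fin MM → Bool} {A : Fin NN → Matrix (Fin n) (Fin n) ℝ}
  {B : Fin NN → Matrix (Fin n) (Fin m) ℝ} {C : Fin NN → Matrix (Fin ℓ) (Fin n) ℝ}
  {D : Fin NN → Matrix (Fin ℓ) (Fin m) ℝ} {E : Fin NN → Matrix (Fin n) (Fin q) ℝ}
  {K : Fin NN → Fin T → Matrix (Fin m) (Fin n) ℝ} {γ : ℝ}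
  {W : XT NN MM T → Matrix (Fin n) (Fin n) ℝ}

theorem meanSquareStable_of_isBoundedReal (hP : ∀ i j, 0 ≤ P i j) (hQ : ∀ i j, 0 ≤ Q i j)
    (hγ : 0 < γ) (hW : IsBoundedReal {χ | inX f χ} (pbar P Q f) (AKmat A B K) (fun χ ↦ E χ.1)
      (CKmat C D K) γ W) : MeanSquareStable P Q f A B E K := by
  obtain ⟨c, hc, lam, hlam0, hlam1, h⟩ := hW.exists_lintegral_sqE_traj_le hγ (pbar_nonneg hP hQ)
    fun χ _ ↦ pbar_eq_zero_of_not_inX χ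
  refine ⟨c, hc, lam, hlam0, hlam1, fun S τ₀ _ σ₀ _ _ _ ↦ ?_⟩
  let := S.inst
  have := S.prob
  exact h S.μ _ (rbarProc_isMarkovChain τ₀ σ₀ S.markov_r S.markov_s S.indep)
    (measurable_rbarProc τ₀ σ₀ S.meas_r S.meas_s) (rbarProc_inX S.r S.s τ₀ σ₀)

theorem hinfSqLtSigma_of_isBoundedReal (hP : ∀ i j, 0 ≤ P i j) (hQ : ∀ i j, 0 ≤ Q i j)
    (hγ : 0 < γ) (hW : IsBoundedReal {χ | inX f χ} (pbar P Q f) (AKmat A B K) (fun χ ↦ E χ.1)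
      (CKmat C D K) γ W) : HinfSqLtSigma P Q f A B C D E K γ := by
  obtain ⟨c, hc, hcγ, h⟩ := hW.exists_tsum_lintegral_sqE_output_le hγ (pbar_nonneg hP hQ)
    fun χ _ ↦ pbar_eq_zero_of_not_inX χ
  refine ⟨c, hc, hcγ, fun S τ₀ _ σ₀ _ _ _ w hw _ _ ↦ ?_⟩
  let := S.inst
  have := S.prob
  exact h S.μ _ (rbarProc_isMarkovChain τ₀ σ₀ S.markov_r S.markov_s S.indep)
    (measurable_rbarProc τ₀ σ₀ S.meas_r S.meas_s) (rbarProc_inX S.r S.s τ₀ σ₀) w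
    fun k ↦ factorsThrough_history_rbarProc τ₀ σ₀ S (hw k)

theorem hinfBlock_eq_fromBlocks (D₁ D₃ B₃₁ : Matrix (Fin n) (Fin n) ℝ)
    (B₃₂ : Matrix (Fin n) (Fin q) ℝ) (B₄₁ : Matrix (Fin ℓ) (Fin n) ℝ) :
    hinfBlock γ D₁ D₃ B₃₁ B₃₂ B₄₁ = fromBlocks (fromBlocks D₁ 0 0 (γ • 1))
      (fromBlocks B₃₁ B₃₂ B₄₁ 0)ᴴ (fromBlocks B₃₁ B₃₂ B₄₁ 0) (fromBlocks D₃ 0 0 1) := by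
  simp [hinfBlock, fromBlocks_transpose]

theorem isUnit_of_hinfBlock_posDef {G X D₃ B₃₁ : Matrix (Fin n) (Fin n) ℝ}
    {B₃₂ : Matrix (Fin n) (Fin q) ℝ} {B₄₁ : Matrix (Fin ℓ) (Fin n) ℝ}
    (h : (hinfBlock γ (G + Gᵀ - X) D₃ B₃₁ B₃₂ B₄₁).PosDef) (hX : X.PosDef) : IsUnit G := by
  have hsub : (G + Gᵀ - X).PosDef := h.submatrix (Sum.inl_injective.comp Sum.inl_injective)
  exact isUnit_of_posDef_add_conjTranspose (by simpa using hsub.add hX)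

open scoped MatrixOrder in
theorem conjTranspose_mul_sum_pbar_inv_mul_le_Fop (hP : ∀ i j, 0 ≤ P i j)
    (hQ : ∀ i j, 0 ≤ Q i j) {J : Matrix (Fin n) (Fin n) ℝ}
    {X : XT NN MM T → Matrix (Fin n) (Fin n) ℝ}
    {Z : XT NN MM T → XT NN MM T → Matrix (Fin n) (Fin n) ℝ} {χ : XT NN MM T}
    (h : ∀ χ', inX f χ' → (fromBlocks (Z χ χ') Jᵀ J (X χ')).PosDef) :
    Jᴴ * (∑ χ', pbar P Q f χ χ' • (X χ')⁻¹) * J ≤ Fop P Q f Z χ := by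
  rw [Fop_eq_sum, Matrix.mul_sum, Matrix.sum_mul]
  refine Finset.sum_le_sum fun χ' _ ↦ ?_
  rw [Matrix.mul_smul, Matrix.smul_mul]
  by_cases hχ' : inX f χ'
  · exact smul_le_smul_of_nonneg_left (conjTranspose_mul_inv_mul_le (h χ' hχ'))
      (pbar_nonneg hP hQ χ χ')
  · simp [pbar_eq_zero_of_not_inX χ hχ']

theorem isBoundedReal_of_lmi (hP : ∀ i j, 0 ≤ P i j) (hQ : ∀ i j, 0 ≤ Q i j)
    {H X : XT NN MM T → Matrix (Fin n) (Fin n) ℝ}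
    {Z : XT NN MM T → XT NN MM T → Matrix (Fin n) (Fin n) ℝ}
    {G : Fin NN → Fin T → Matrix (Fin n) (Fin n) ℝ}
    (hLMI : ∀ χ : XT NN MM T, inX f χ →
      (hinfBlock γ (G χ.2.2.1 χ.2.2.2 + (G χ.2.2.1 χ.2.2.2)ᵀ - X χ)
        (H χ + (H χ)ᵀ - Fop P Q f Z χ) (AKmat A B K χ * G χ.2.2.1 χ.2.2.2) (E χ.1)
        (CKmat C D K χ * G χ.2.2.1 χ.2.2.2)).PosDef)
    (hZ : ∀ χ χ' : XT NN MM T, inX f χ → inX f χ' →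
      (fromBlocks (Z χ χ') (H χ)ᵀ (H χ) (X χ')).PosDef) :
    IsBoundedReal {χ | inX f χ} (pbar P Q f) (AKmat A B K) (fun χ ↦ E χ.1) (CKmat C D K) γ
      fun χ ↦ (X χ)⁻¹ := by
  have hX χ (hχ : inX f χ) : (X χ).PosDef := posDef_of_fromBlocks₂₂ (hZ χ χ hχ hχ)
  refine ⟨fun χ hχ ↦ (hX χ hχ).inv, fun χ hχ ↦ ?_⟩
  have hY : (∑ χ', pbar P Q f χ χ' • (X χ')⁻¹).PosSemidef := posSemidef_sum _ fun χ' _ ↦ by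
    by_cases hχ' : inX f χ'
    · exact (hX χ' hχ').inv.posSemidef.smul (pbar_nonneg hP hQ χ χ')
    · simpa [pbar_eq_zero_of_not_inX χ hχ'] using PosSemidef.zero
  refine boundedRealMatrix_posDef_of_lmi ?_ (hX χ hχ)
    (isUnit_of_hinfBlock_posDef (hLMI χ hχ) (hX χ hχ)) hY
    (conjTranspose_mul_sum_pbar_inv_mul_le_Fop hP hQ fun χ' ↦ hZ χ χ' hχ)
  simpa only [hinfBlock_eq_fromBlocks, conjTranspose_eq_transpose_of_trivial] using hLMI χ hχ

end Synthesis

/-- the `H∞` LMIs imply invertibility of the `G_{γ,δ}` and, for gains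
`K_{γ,δ} = F_{γ,δ} G_{γ,δ}⁻¹`, mean square stability of `Σ_K` and `‖Σ_K‖∞² < γ₀`. -/
theorem hinf_lmi_control
    {NN MM T n m q ℓ : ℕ} [NeZero NN] [NeZero MM] [NeZero T]
    [NeZero n] [NeZero m] [NeZero q] [NeZero ℓ]
    (P : Matrix (Fin NN) (Fin NN) ℝ) (Qm : Matrix (Fin MM) (Fin MM) ℝ)
    (hP0 : ∀ i j, 0 ≤ P i j) (hP1 : ∀ i, ∑ j, P i j = 1)
    (hQ0 : ∀ i j, 0 ≤ Qm i j) (hQ1 : ∀ i, ∑ j, Qm i j = 1)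
    (f : Fin MM → Bool)
    (A : Fin NN → Matrix (Fin n) (Fin n) ℝ) (B : Fin NN → Matrix (Fin n) (Fin m) ℝ)
    (C : Fin NN → Matrix (Fin ℓ) (Fin n) ℝ) (D : Fin NN → Matrix (Fin ℓ) (Fin m) ℝ)
    (E : Fin NN → Matrix (Fin n) (Fin q) ℝ)
    (γ₀ : ℝ) (hγ₀ : 0 < γ₀)
    (H X : XT NN MM T → Matrix (Fin n) (Fin n) ℝ)
    (Z : XT NN MM T → XT NN MM T → Matrix (Fin n) (Fin n) ℝ)
    (hXsym : ∀ χ, inX f χ → (X χ).IsHermitian)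
    (hZsym : ∀ χ χ', inX f χ → inX f χ' → (Z χ χ').IsHermitian)
    (G : Fin NN → Fin T → Matrix (Fin n) (Fin n) ℝ)
    (F : Fin NN → Fin T → Matrix (Fin m) (Fin n) ℝ)
    (hLMI1 : ∀ χ : XT NN MM T, inX f χ →
      (hinfBlock γ₀ (G χ.2.2.1 χ.2.2.2 + (G χ.2.2.1 χ.2.2.2)ᵀ - X χ)
        (H χ + (H χ)ᵀ - Fop P Qm f Z χ)
        (A χ.1 * G χ.2.2.1 χ.2.2.2 + B χ.1 * F χ.2.2.1 χ.2.2.2)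
        (E χ.1)
        (C χ.1 * G χ.2.2.1 χ.2.2.2 + D χ.1 * F χ.2.2.1 χ.2.2.2)).PosDef)
    (hLMI2 : ∀ χ χ' : XT NN MM T, inX f χ → inX f χ' →
      (Matrix.fromBlocks (Z χ χ') (H χ)ᵀ (H χ) (X χ')).PosDef) :
    (∀ g d, Admissible f g d → IsUnit (G g d)) ∧
    ∀ K : Fin NN → Fin T → Matrix (Fin m) (Fin n) ℝ,
      (∀ g d, Admissible f g d → K g d = F g d * (G g d)⁻¹) →
      MeanSquareStable P Qm f A B E K
        ∧ HinfSqLtSigma P Qm f A B C D E K γ₀ := by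
  have hG (χ : XT NN MM T) (hχ : inX f χ) : IsUnit (G χ.2.2.1 χ.2.2.2) :=
    isUnit_of_hinfBlock_posDef (hLMI1 χ hχ) (posDef_of_fromBlocks₂₂ (hLMI2 χ χ hχ hχ))
  refine ⟨fun g d ⟨α, β, hχ⟩ ↦ hG (α, β, g, d) hχ, fun K hK ↦ ?_⟩
  have hKG (χ : XT NN MM T) (hχ : inX f χ) :
      K χ.2.2.1 χ.2.2.2 * G χ.2.2.1 χ.2.2.2 = F χ.2.2.1 χ.2.2.2 := by
    have := (hG χ hχ).invertible
    rw [hK _ _ ⟨χ.1, χ.2.1, hχ⟩, inv_mul_cancel_right_of_invertible]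
  have hLMI (χ : XT NN MM T) (hχ : inX f χ) :
      (hinfBlock γ₀ (G χ.2.2.1 χ.2.2.2 + (G χ.2.2.1 χ.2.2.2)ᵀ - X χ)
        (H χ + (H χ)ᵀ - Fop P Qm f Z χ) (AKmat A B K χ * G χ.2.2.1 χ.2.2.2) (E χ.1)
        (CKmat C D K χ * G χ.2.2.1 χ.2.2.2)).PosDef := by
    rw [AKmat, CKmat, Matrix.add_mul, Matrix.add_mul, Matrix.mul_assoc, Matrix.mul_assoc,
      hKG χ hχ]
    exact hLMI1 χ hχ
  have hW := isBoundedReal_of_lmi hP0 hQ0 hLMI hLMI2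
  exact ⟨meanSquareStable_of_isBoundedReal hP0 hQ0 hγ₀ hW,
    hinfSqLtSigma_of_isBoundedReal hP0 hQ0 hγ₀ hW⟩

end
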